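/- Let 0 < s < 1 and let σ : ℝ^N → (0,∞) be a screening function with 0 < inf_{ℝ^N} σ ≤ sup_{ℝ^N} σ < ∞. Then there exists a constant c = c(N, s, σ) > 0 such that for every Schwartz function f : ℝ^N → ℝ: c^{−1} ∫_{ℝ^N} min{|ξ|^{2s}, |ξ|^2} |f̂(ξ)|^2 dξ ≤ |f|²_{W̃^{s,2}_{(σ)}(ℝ^N)} ≤ c ∫_{ℝ^N} min{|ξ|^{2s}, |ξ|^2} |f̂(ξ)|^2 dξ, where f̂ denotes the Fourier transform of f. -/

import Mathlib

open MeasureTheory Metric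
open scoped ENNReal FourierTransform

/-- The `p`-th power (`p = 2`) of the screened homogeneous fractional Sobolev seminorm
on all of `ℝ^N`:
`|f|²_{W̃^{s,2}_{(σ)}(ℝ^N)} = ∫_{ℝ^N} ∫_{B(0,σ(x))} |f(x+h)-f(x)|² / |h|^{2s+N} dh dx`,
valued in `ℝ≥0∞`, for a real-valued screening function `σ`. -/
noncomputable def screenedSeminormSq (N : ℕ) (s : ℝ)
    (σ : EuclideanSpace ℝ (Fin N) → ℝ)
    (f : EuclideanSpace ℝ (Fin N) → ℝ) : ℝ≥0∞ :=
  ∫⁻ x, ∫⁻ h in Metric.ball (0 : EuclideanSpace ℝ (Fin N)) (σ x),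
      ENNReal.ofReal (|f (x + h) - f x| ^ 2 / ‖h‖ ^ (2 * s + N))

lemma S15.plancherel {N : ℕ} (f : SchwartzMap (EuclideanSpace ℝ (Fin N)) ℝ)
    (h : EuclideanSpace ℝ (Fin N)) :
    ∫⁻ x, ENNReal.ofReal (|f (x + h) - f x| ^ 2) =
      ∫⁻ ξ, ENNReal.ofReal (‖(Real.fourierChar (inner ℝ h ξ) : ℂ) - 1‖ ^ 2) *
        ENNReal.ofReal (‖𝓕 (fun x => (f x : ℂ)) ξ‖ ^ 2) := by
  set F : SchwartzMap (EuclideanSpace ℝ (Fin N)) ℂ := f.postcompCLM Complex.ofRealCLM with hF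
  set G : SchwartzMap (EuclideanSpace ℝ (Fin N)) ℂ := F.compSubConstCLM ℝ (-h) with hG
  have hGx : ∀ x, G x = F (x + h) := by
    intro x; simp [hG]
  have hFx : (⇑F) = fun x => (f x : ℂ) := by ext x; simp [hF]
  have h1 := SchwartzMap.integral_norm_sq_fourier (G - F)
  have i1 : Integrable (fun x => ‖(G - F) x‖ ^ 2) :=
    ((G - F).memLp 2).integrable_norm_pow (by norm_num)
  have i2 : Integrable (fun x => ‖(𝓕 (G - F)) x‖ ^ 2) :=
    ((𝓕 (G - F)).memLp 2).integrable_norm_pow (by norm_num)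
  have h2 : ∫⁻ x, ENNReal.ofReal (‖(𝓕 (G - F)) x‖ ^ 2) = ∫⁻ x, ENNReal.ofReal (‖(G - F) x‖ ^ 2) := by
    rw [← ofReal_integral_eq_lintegral_ofReal i1 (by filter_upwards with x; positivity),
      ← ofReal_integral_eq_lintegral_ofReal i2 (by filter_upwards with x; positivity), h1]
  have h3 : ∀ x, ‖(G - F) x‖ = |f (x + h) - f x| := by
    intro x
    rw [sub_apply, hGx, hFx]
    rw [← Complex.ofReal_sub, Complex.norm_real, Real.norm_eq_abs]
  have h4 : ∀ ξ, 𝓕 (G - F) ξ =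
      ((Real.fourierChar (inner ℝ h ξ) : ℂ) - 1) * 𝓕 (fun x => (f x : ℂ)) ξ := by
    intro ξ
    have e1 : 𝓕 (G - F) = 𝓕 G - 𝓕 F := map_sub (FourierTransform.fourierCLM ℂ (SchwartzMap (EuclideanSpace ℝ (Fin N)) ℂ)) G F
    have e2 : (⇑G) = (⇑F) ∘ fun v => v + h := by ext x; simp [hGx]
    have e3 := congrFun (VectorFourier.fourierIntegral_comp_add_right Real.fourierChar
      (volume : Measure (EuclideanSpace ℝ (Fin N))) (innerₗ _) (⇑F) h) ξ
    rw [e1, sub_apply, SchwartzMap.fourier_coe, SchwartzMap.fourier_coe, e2, ← hFx]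
    have e4 : 𝓕 ((⇑F) ∘ fun v => v + h) ξ = Real.fourierChar (inner ℝ h ξ) • 𝓕 (⇑F) ξ := e3
    rw [e4, Circle.smul_def, smul_eq_mul]; ring
  simp_rw [h3] at h2
  rw [← h2]
  congr 1; ext ξ
  rw [h4, norm_mul, mul_pow, ENNReal.ofReal_mul (by positivity)]

lemma S15.swap {N : ℕ} (p r : ℝ) (f : SchwartzMap (EuclideanSpace ℝ (Fin N)) ℝ) :
    ∫⁻ x, ∫⁻ h in Metric.ball (0 : EuclideanSpace ℝ (Fin N)) r,
      ENNReal.ofReal (|f (x + h) - f x| ^ 2 / ‖h‖ ^ p) =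
    ∫⁻ ξ, (∫⁻ h in Metric.ball (0 : EuclideanSpace ℝ (Fin N)) r,
        ENNReal.ofReal (‖(Real.fourierChar (inner ℝ h ξ) : ℂ) - 1‖ ^ 2 / ‖h‖ ^ p)) *
        ENNReal.ofReal (‖𝓕 (fun x => (f x : ℂ)) ξ‖ ^ 2) := by
  have mf : Measurable (fun x => f x) := f.continuous.measurable
  have mF : Measurable (fun ξ => 𝓕 (fun x => (f x : ℂ)) ξ) := by
    have := (𝓕 (f.postcompCLM Complex.ofRealCLM)).continuous.measurable
    rw [SchwartzMap.fourier_coe] at this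
    exact this
  have mc : Continuous (fun t : ℝ => (Real.fourierChar t : ℂ)) :=
    continuous_subtype_val.comp Real.continuous_fourierChar
  have mK : Measurable (fun q : EuclideanSpace ℝ (Fin N) × EuclideanSpace ℝ (Fin N) =>
      ENNReal.ofReal (‖(Real.fourierChar (inner ℝ q.1 q.2) : ℂ) - 1‖ ^ 2 / ‖q.1‖ ^ p)) := by
    have : Measurable (fun q : EuclideanSpace ℝ (Fin N) × EuclideanSpace ℝ (Fin N) =>
      (Real.fourierChar (inner ℝ q.1 q.2) : ℂ)) :=
      (mc.comp (continuous_fst.inner continuous_snd)).measurable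
    fun_prop
  rw [lintegral_lintegral_swap (by unfold Function.uncurry; fun_prop)]
  have key : ∀ h : EuclideanSpace ℝ (Fin N),
      ∫⁻ x, ENNReal.ofReal (|f (x + h) - f x| ^ 2 / ‖h‖ ^ p) =
      ∫⁻ ξ, ENNReal.ofReal (‖(Real.fourierChar (inner ℝ h ξ) : ℂ) - 1‖ ^ 2 / ‖h‖ ^ p) *
        ENNReal.ofReal (‖𝓕 (fun x => (f x : ℂ)) ξ‖ ^ 2) := by
    intro h
    have hp : 0 ≤ (‖h‖ ^ p)⁻¹ := by positivity
    simp_rw [div_eq_inv_mul, ENNReal.ofReal_mul hp, mul_assoc]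
    rw [lintegral_const_mul' _ _ ENNReal.ofReal_ne_top,
      lintegral_const_mul' _ _ ENNReal.ofReal_ne_top, S15.plancherel]
  simp_rw [key]
  rw [lintegral_lintegral_swap]
  · congr 1; ext ξ
    rw [lintegral_mul_const' _ _ ENNReal.ofReal_ne_top]
  · unfold Function.uncurry
    exact (mK.mul (by fun_prop)).aemeasurable

lemma S15.char_norm (t : ℝ) : ‖(Real.fourierChar t : ℂ) - 1‖ = 2 * |Real.sin (Real.pi * t)| := by
  rw [Real.fourierChar_apply, show ((2 * Real.pi * t : ℝ) : ℂ) * Complex.I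
    = Complex.I * ((2 * Real.pi * t : ℝ) : ℂ) by ring, Complex.norm_exp_I_mul_ofReal_sub_one,
    norm_mul, Real.norm_eq_abs, Real.norm_eq_abs, show 2 * Real.pi * t / 2 = Real.pi * t by ring]
  simp

lemma S15.char_upper1 (t : ℝ) : ‖(Real.fourierChar t : ℂ) - 1‖ ^ 2 ≤ 4 * Real.pi ^ 2 * t ^ 2 := by
  rw [S15.char_norm]
  have h : |Real.sin (Real.pi * t)| ≤ |Real.pi * t| := Real.abs_sin_le_abs
  have : (2 * |Real.sin (Real.pi * t)|) ^ 2 ≤ (2 * |Real.pi * t|) ^ 2 := by gcongr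
  refine this.trans (le_of_eq ?_)
  rw [mul_pow, sq_abs]; ring

lemma S15.char_upper2 (t : ℝ) : ‖(Real.fourierChar t : ℂ) - 1‖ ^ 2 ≤ 4 * Real.pi ^ 2 * 1 := by
  rw [S15.char_norm]
  have h : |Real.sin (Real.pi * t)| ≤ 1 := Real.abs_sin_le_one _
  have : (2 * |Real.sin (Real.pi * t)|) ^ 2 ≤ (2 * 1) ^ 2 := by gcongr
  nlinarith [Real.pi_gt_three]

lemma S15.char_lower (t : ℝ) (ht : |t| ≤ 1 / 2) :
    16 * t ^ 2 ≤ ‖(Real.fourierChar t : ℂ) - 1‖ ^ 2 := by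
  rw [S15.char_norm]
  have hp := Real.pi_pos
  have h := Real.mul_abs_le_abs_sin (x := Real.pi * t)
    (by rw [abs_mul, abs_of_pos hp]; nlinarith)
  rw [abs_mul, abs_of_pos hp] at h
  have h' : 2 * |t| ≤ |Real.sin (Real.pi * t)| := by
    refine le_trans (le_of_eq ?_) h; field_simp
  have : (2 * (2 * |t|)) ^ 2 ≤ (2 * |Real.sin (Real.pi * t)|) ^ 2 := by gcongr
  refine le_trans (le_of_eq ?_) this
  rw [mul_pow, mul_pow, sq_abs]; ring

lemma S15.lower {N : ℕ} (s : ℝ) (hs0 : 0 < s) (hs1 : s < 1) (m : ℝ) (hm : 0 < m) :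
    ∃ c : ℝ, 0 < c ∧ ∀ ξ : EuclideanSpace ℝ (Fin N),
      ENNReal.ofReal (min (‖ξ‖ ^ (2 * s)) (‖ξ‖ ^ 2)) ≤ ENNReal.ofReal c *
      ∫⁻ h in Metric.ball (0 : EuclideanSpace ℝ (Fin N)) m,
        ENNReal.ofReal (‖(Real.fourierChar (inner ℝ h ξ) : ℂ) - 1‖ ^ 2 / ‖h‖ ^ (2 * s + N)) := by
  set w : ℝ := (volume (ball (0 : EuclideanSpace ℝ (Fin N)) 1)).toReal with hw
  have hwt : volume (ball (0 : EuclideanSpace ℝ (Fin N)) 1) ≠ ⊤ := measure_ball_lt_top.ne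
  have hw0 : 0 < w := ENNReal.toReal_pos (measure_ball_pos _ _ zero_lt_one).ne' hwt
  set c0 : ℝ := 25 / 4 * w / 8 ^ N with hc0
  have hc0p : 0 < c0 := by positivity
  refine ⟨c0⁻¹ * (m ^ (-(2 - 2 * s)) + 2 ^ (2 - 2 * s)), by positivity, fun ξ => ?_⟩
  rcases eq_or_ne ξ 0 with rfl | hξ
  · simp [Real.zero_rpow (show 2 * s ≠ 0 by positivity)]
  have hn : 0 < ‖ξ‖ := norm_pos_iff.2 hξ
  set ρ : ℝ := min m (1 / (2 * ‖ξ‖)) with hρ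
  have hρ0 : 0 < ρ := by positivity
  have hρm : ρ ≤ m := min_le_left _ _
  have hρx : ρ * ‖ξ‖ ≤ 1 / 2 := by
    have : ρ ≤ 1 / (2 * ‖ξ‖) := min_le_right _ _
    calc ρ * ‖ξ‖ ≤ 1 / (2 * ‖ξ‖) * ‖ξ‖ := by gcongr
      _ = 1 / 2 := by field_simp
  set a : EuclideanSpace ℝ (Fin N) := (3 * ρ / 4 / ‖ξ‖) • ξ with ha
  have han : ‖a‖ = 3 * ρ / 4 := by
    rw [ha, norm_smul, Real.norm_of_nonneg (by positivity)]; field_simp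
  have hai : inner ℝ a ξ = 3 * ρ / 4 * ‖ξ‖ := by
    rw [ha, real_inner_smul_left, real_inner_self_eq_norm_sq]; field_simp
  have hball : ∀ h ∈ ball a (ρ / 8), ‖h‖ < ρ ∧ 5 / 8 * ρ * ‖ξ‖ ≤ inner ℝ h ξ := by
    intro h hh
    rw [mem_ball, dist_eq_norm] at hh
    have e : h = a + (h - a) := by abel
    constructor
    · have := norm_add_le a (h - a)
      rw [← e, han] at this; linarith
    · have h1 : |inner ℝ (h - a) ξ| ≤ ‖h - a‖ * ‖ξ‖ := abs_real_inner_le_norm _ _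
      have h2 : ‖h - a‖ * ‖ξ‖ ≤ ρ / 8 * ‖ξ‖ := by gcongr
      have h3 : inner ℝ h ξ = inner ℝ a ξ + inner ℝ (h - a) ξ := by rw [← inner_add_left, ← e]
      have h4 := (abs_le.1 (h1.trans h2)).1
      rw [h3, hai]; linarith
  have hK : ENNReal.ofReal (c0 * (‖ξ‖ ^ 2 * ρ ^ (2 - 2 * s))) ≤
      ∫⁻ h in Metric.ball (0 : EuclideanSpace ℝ (Fin N)) m,
        ENNReal.ofReal (‖(Real.fourierChar (inner ℝ h ξ) : ℂ) - 1‖ ^ 2 / ‖h‖ ^ (2 * s + N)) := by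
    calc ENNReal.ofReal (c0 * (‖ξ‖ ^ 2 * ρ ^ (2 - 2 * s)))
        = ENNReal.ofReal (16 * (5 / 8 * ρ * ‖ξ‖) ^ 2 / ρ ^ (2 * s + N)) * volume (ball a (ρ / 8)) := by
          rw [Measure.addHaar_ball_of_pos _ _ (by positivity), finrank_euclideanSpace_fin,
            ← ENNReal.ofReal_toReal hwt, ← hw, ← ENNReal.ofReal_mul (by positivity),
            ← ENNReal.ofReal_mul (by positivity)]
          congr 1
          rw [hc0, Real.rpow_sub hρ0, Real.rpow_add hρ0, Real.rpow_natCast, Real.rpow_two, div_pow]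
          field_simp
          ring
      _ = ∫⁻ h in ball a (ρ / 8), ENNReal.ofReal (16 * (5 / 8 * ρ * ‖ξ‖) ^ 2 / ρ ^ (2 * s + N)) := by
          rw [setLIntegral_const]
      _ ≤ ∫⁻ h in ball a (ρ / 8),
        ENNReal.ofReal (‖(Real.fourierChar (inner ℝ h ξ) : ℂ) - 1‖ ^ 2 / ‖h‖ ^ (2 * s + N)) := by
          refine setLIntegral_mono' measurableSet_ball fun h hh => ENNReal.ofReal_le_ofReal ?_
          obtain ⟨h1, h2⟩ := hball h hh
          have hpos : 0 < 5 / 8 * ρ * ‖ξ‖ := by positivity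
          have h3 : |inner ℝ h ξ| ≤ 1 / 2 :=
            (abs_real_inner_le_norm h ξ).trans
              ((mul_le_mul_of_nonneg_right h1.le hn.le).trans hρx)
          have h4 := S15.char_lower _ h3
          have h0 : h ≠ 0 := by
            rintro rfl
            rw [inner_zero_left] at h2; linarith
          have h0' : 0 < ‖h‖ := norm_pos_iff.2 h0
          refine div_le_div₀ (by positivity) (le_trans ?_ h4) (by positivity)
            (Real.rpow_le_rpow h0'.le h1.le (by positivity))
          gcongr
      _ ≤ _ := by
          refine lintegral_mono_set fun h hh => ?_
          rw [mem_ball_zero_iff]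
          exact (hball h hh).1.trans_le hρm
  refine le_trans ?_ (mul_le_mul_right hK _)
  rw [← ENNReal.ofReal_mul (by positivity)]
  refine ENNReal.ofReal_le_ofReal ?_
  have e : c0⁻¹ * (m ^ (-(2 - 2 * s)) + 2 ^ (2 - 2 * s)) * (c0 * (‖ξ‖ ^ 2 * ρ ^ (2 - 2 * s)))
     = m ^ (-(2 - 2 * s)) * (‖ξ‖ ^ 2 * ρ ^ (2 - 2 * s)) +
       2 ^ (2 - 2 * s) * (‖ξ‖ ^ 2 * ρ ^ (2 - 2 * s)) := by field_simp
  rw [e]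
  have t1 : 0 ≤ m ^ (-(2 - 2 * s)) * (‖ξ‖ ^ 2 * ρ ^ (2 - 2 * s)) := by positivity
  have t2 : 0 ≤ (2 : ℝ) ^ (2 - 2 * s) * (‖ξ‖ ^ 2 * ρ ^ (2 - 2 * s)) := by positivity
  rcases min_choice m (1 / (2 * ‖ξ‖)) with hc | hc
  · have : m ^ (-(2 - 2 * s)) * (‖ξ‖ ^ 2 * ρ ^ (2 - 2 * s)) = ‖ξ‖ ^ 2 := by
      rw [hρ, hc, Real.rpow_neg hm.le]; field_simp
    have := min_le_right (‖ξ‖ ^ (2 * s)) (‖ξ‖ ^ 2)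
    linarith
  · have : (2 : ℝ) ^ (2 - 2 * s) * (‖ξ‖ ^ 2 * ρ ^ (2 - 2 * s)) = ‖ξ‖ ^ (2 * s) := by
      rw [hρ, hc, one_div, Real.inv_rpow (by positivity), Real.mul_rpow (by norm_num) hn.le,
        Real.rpow_sub hn, Real.rpow_two]
      field_simp
    have := min_le_left (‖ξ‖ ^ (2 * s)) (‖ξ‖ ^ 2)
    linarith

lemma S15.finJ {N : ℕ} (hN : 1 ≤ N) (s : ℝ) (hs0 : 0 < s) (hs1 : s < 1) (R : ℝ) :
    ∫⁻ h in Metric.ball (0 : EuclideanSpace ℝ (Fin N)) R,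
        ENNReal.ofReal (‖h‖ ^ 2 / ‖h‖ ^ (2 * s + N)) ≠ ⊤ := by
  have hi : IntegrableOn (fun h : EuclideanSpace ℝ (Fin N) => ‖h‖ ^ 2 / ‖h‖ ^ (2 * s + N))
      (ball 0 R) volume := by
    refine integrableOn_ball_of_norm_le_rpow (C := 1) (α := 2 * s + N - 2)
      (by rw [finrank_euclideanSpace_fin]; exact hN)
      (by rw [finrank_euclideanSpace_fin]; linarith) ?_ ?_
    · refine Filter.Eventually.of_forall fun x => ?_
      rcases eq_or_ne x 0 with rfl | hx
      · simp only [norm_zero]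
        norm_num
        positivity
      · have hx' : 0 < ‖x‖ := norm_pos_iff.2 hx
        rw [Real.norm_of_nonneg (by positivity), one_mul, neg_sub, Real.rpow_sub hx', Real.rpow_two]
    · exact Measurable.aestronglyMeasurable (by fun_prop)
  exact hi.lintegral_lt_top.ne

lemma S15.finI {N : ℕ} (hN : 1 ≤ N) (s : ℝ) (hs0 : 0 < s) (hs1 : s < 1) :
    ∫⁻ h : EuclideanSpace ℝ (Fin N),
        ENNReal.ofReal (min 1 (‖h‖ ^ 2) / ‖h‖ ^ (2 * s + N)) ≠ ⊤ := by
  rw [← lintegral_add_compl _ (measurableSet_ball (x := (0 : EuclideanSpace ℝ (Fin N))) (ε := 1))]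
  refine ENNReal.add_ne_top.2 ⟨?_, ?_⟩
  · refine ne_top_of_le_ne_top (S15.finJ hN s hs0 hs1 1) (lintegral_mono fun h => ?_)
    refine ENNReal.ofReal_le_ofReal ?_
    gcongr
    exact min_le_right _ _
  · have hf := finite_integral_one_add_norm (E := EuclideanSpace ℝ (Fin N)) (μ := volume)
      (r := 2 * s + N) (by rw [finrank_euclideanSpace_fin]; linarith)
    have hf2 := ENNReal.mul_ne_top (ENNReal.ofReal_ne_top (r := (2 : ℝ) ^ (2 * s + N))) hf.ne
    refine ne_top_of_le_ne_top hf2 ?_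
    rw [← lintegral_const_mul' _ _ ENNReal.ofReal_ne_top]
    refine le_trans (setLIntegral_mono' measurableSet_ball.compl fun h hh => ?_)
      (setLIntegral_le_lintegral _ _)
    rw [← ENNReal.ofReal_mul (by positivity)]
    refine ENNReal.ofReal_le_ofReal ?_
    have h1 : 1 ≤ ‖h‖ := by simpa using hh
    have h0 : 0 < ‖h‖ := by linarith
    have hp : 0 < 2 * s + N := by positivity
    calc min 1 (‖h‖ ^ 2) / ‖h‖ ^ (2 * s + N) ≤ 1 / ‖h‖ ^ (2 * s + N) := by
          gcongr; exact min_le_left _ _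
      _ ≤ 1 / ((1 + ‖h‖) / 2) ^ (2 * s + N) := by
          gcongr; linarith
      _ = _ := by
          rw [Real.div_rpow (by positivity) (by positivity), Real.rpow_neg (by positivity)]
          field_simp

lemma S15.upper {N : ℕ} (hN : 1 ≤ N) (s : ℝ) (hs0 : 0 < s) (hs1 : s < 1) (M : ℝ) :
    ∃ c : ℝ, 0 < c ∧ ∀ ξ : EuclideanSpace ℝ (Fin N),
      ∫⁻ h in Metric.ball (0 : EuclideanSpace ℝ (Fin N)) M,
        ENNReal.ofReal (‖(Real.fourierChar (inner ℝ h ξ) : ℂ) - 1‖ ^ 2 / ‖h‖ ^ (2 * s + N)) ≤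
      ENNReal.ofReal c * ENNReal.ofReal (min (‖ξ‖ ^ (2 * s)) (‖ξ‖ ^ 2)) := by
  have hI := S15.finI hN s hs0 hs1
  have hJ := S15.finJ hN s hs0 hs1 M
  set I := ∫⁻ h : EuclideanSpace ℝ (Fin N),
        ENNReal.ofReal (min 1 (‖h‖ ^ 2) / ‖h‖ ^ (2 * s + N)) with hIdef
  set J := ∫⁻ h in Metric.ball (0 : EuclideanSpace ℝ (Fin N)) M,
        ENNReal.ofReal (‖h‖ ^ 2 / ‖h‖ ^ (2 * s + N)) with hJdef
  refine ⟨4 * Real.pi ^ 2 * (I.toReal + J.toReal + 1), by positivity, fun ξ => ?_⟩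
  have hb : ∀ h : EuclideanSpace ℝ (Fin N),
      ‖(Real.fourierChar (inner ℝ h ξ) : ℂ) - 1‖ ^ 2 ≤ 4 * Real.pi ^ 2 * (‖ξ‖ ^ 2 * ‖h‖ ^ 2) := by
    intro h
    refine (S15.char_upper1 _).trans ?_
    have := abs_real_inner_le_norm h ξ
    have h2 : (inner ℝ h ξ) ^ 2 ≤ (‖h‖ * ‖ξ‖) ^ 2 := sq_le_sq' (abs_le.1 this).1 (abs_le.1 this).2
    rw [mul_pow, mul_comm] at h2
    gcongr
  have hKJ : ∫⁻ h in Metric.ball (0 : EuclideanSpace ℝ (Fin N)) M,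
        ENNReal.ofReal (‖(Real.fourierChar (inner ℝ h ξ) : ℂ) - 1‖ ^ 2 / ‖h‖ ^ (2 * s + N)) ≤
      ENNReal.ofReal (4 * Real.pi ^ 2 * ‖ξ‖ ^ 2) * J := by
    rw [hJdef, ← lintegral_const_mul' _ _ ENNReal.ofReal_ne_top]
    refine lintegral_mono fun h => ?_
    rw [← ENNReal.ofReal_mul (by positivity)]
    refine ENNReal.ofReal_le_ofReal ?_
    rw [← mul_div_assoc, mul_assoc]
    gcongr
    exact hb h
  have hKI : ∫⁻ h in Metric.ball (0 : EuclideanSpace ℝ (Fin N)) M,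
        ENNReal.ofReal (‖(Real.fourierChar (inner ℝ h ξ) : ℂ) - 1‖ ^ 2 / ‖h‖ ^ (2 * s + N)) ≤
      ENNReal.ofReal (4 * Real.pi ^ 2 * ‖ξ‖ ^ (2 * s)) * I := by
    rcases eq_or_ne ξ 0 with rfl | hξ
    · simp
    have hn : 0 < ‖ξ‖ := norm_pos_iff.2 hξ
    have hsc : I = ENNReal.ofReal (‖ξ‖ ^ N) * ∫⁻ h : EuclideanSpace ℝ (Fin N),
        ENNReal.ofReal (min 1 (‖ξ‖ ^ 2 * ‖h‖ ^ 2) / (‖ξ‖ ^ (2 * s + N) * ‖h‖ ^ (2 * s + N))) := by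
      have h1 := Measure.map_addHaar_smul (volume : Measure (EuclideanSpace ℝ (Fin N))) hn.ne'
      have h2 : ∫⁻ h, ENNReal.ofReal (min 1 (‖h‖ ^ 2) / ‖h‖ ^ (2 * s + N))
          ∂(Measure.map (‖ξ‖ • ·) (volume : Measure (EuclideanSpace ℝ (Fin N)))) =
          ∫⁻ h : EuclideanSpace ℝ (Fin N), ENNReal.ofReal
            (min 1 (‖ξ‖ ^ 2 * ‖h‖ ^ 2) / (‖ξ‖ ^ (2 * s + N) * ‖h‖ ^ (2 * s + N))) := by
        rw [lintegral_map (by fun_prop) (by fun_prop)]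
        congr 1; ext h
        rw [norm_smul, norm_norm, mul_pow, Real.mul_rpow (norm_nonneg _) (norm_nonneg _)]
      rw [← h2, h1, lintegral_smul_measure, ← hIdef, smul_eq_mul, ← mul_assoc,
        ← ENNReal.ofReal_mul (by positivity), finrank_euclideanSpace_fin,
        abs_of_nonneg (by positivity), mul_inv_cancel₀ (by positivity), ENNReal.ofReal_one, one_mul]
    rw [hsc, ← mul_assoc, ← ENNReal.ofReal_mul (by positivity),
      ← lintegral_const_mul' _ _ ENNReal.ofReal_ne_top]
    refine le_trans (lintegral_mono fun h => ?_) (setLIntegral_le_lintegral _ _)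
    rw [← ENNReal.ofReal_mul (by positivity)]
    refine ENNReal.ofReal_le_ofReal ?_
    have e : 4 * Real.pi ^ 2 * ‖ξ‖ ^ (2 * s) * ‖ξ‖ ^ N *
        (min 1 (‖ξ‖ ^ 2 * ‖h‖ ^ 2) / (‖ξ‖ ^ (2 * s + N) * ‖h‖ ^ (2 * s + N))) =
        4 * Real.pi ^ 2 * min 1 (‖ξ‖ ^ 2 * ‖h‖ ^ 2) / ‖h‖ ^ (2 * s + N) := by
      rw [Real.rpow_add hn, Real.rpow_natCast, div_mul_eq_div_div]
      field_simp
    rw [e]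
    gcongr
    rw [mul_min_of_nonneg _ _ (by positivity)]
    exact le_min (S15.char_upper2 _) (hb h)
  rw [← ENNReal.ofReal_mul (by positivity)]
  rcases min_choice (‖ξ‖ ^ (2 * s)) (‖ξ‖ ^ 2) with hc | hc
  · refine hKI.trans ?_
    rw [hc, ← ENNReal.ofReal_toReal hI, ← ENNReal.ofReal_mul (by positivity)]
    refine ENNReal.ofReal_le_ofReal ?_
    rw [ENNReal.toReal_ofReal ENNReal.toReal_nonneg, mul_right_comm]
    gcongr
    linarith [ENNReal.toReal_nonneg (a := J)]
  · refine hKJ.trans ?_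
    rw [hc, ← ENNReal.ofReal_toReal hJ, ← ENNReal.ofReal_mul (by positivity)]
    refine ENNReal.ofReal_le_ofReal ?_
    rw [ENNReal.toReal_ofReal ENNReal.toReal_nonneg, mul_right_comm]
    gcongr
    linarith [ENNReal.toReal_nonneg (a := I)]

/-- Let `0 < s < 1` and let `σ : ℝ^N → (0,∞)` be a screening function
with `0 < inf σ ≤ sup σ < ∞`.  Then there is a constant `c = c(N,s,σ) > 0` so that for
every Schwartz function `f : ℝ^N → ℝ`:
`c⁻¹ ∫ min{|ξ|^{2s}, |ξ|²} |f̂(ξ)|² dξ ≤ |f|²_{W̃^{s,2}_{(σ)}}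
  ≤ c ∫ min{|ξ|^{2s}, |ξ|²} |f̂(ξ)|² dξ`, where `f̂` is the Fourier transform. -/
theorem statement15 (N : ℕ) (s : ℝ) (hs0 : 0 < s) (hs1 : s < 1)
    (σ : EuclideanSpace ℝ (Fin N) → ℝ) (hσlsc : LowerSemicontinuous σ)
    (m M : ℝ) (hm : 0 < m) (hσbd : ∀ x, m ≤ σ x ∧ σ x ≤ M) :
    ∃ c : ℝ, 0 < c ∧
      ∀ f : SchwartzMap (EuclideanSpace ℝ (Fin N)) ℝ,
        (∫⁻ ξ, ENNReal.ofReal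
              (min (‖ξ‖ ^ (2 * s)) (‖ξ‖ ^ 2) *
                ‖𝓕 (fun x => (f x : ℂ)) ξ‖ ^ 2))
            ≤ ENNReal.ofReal c * screenedSeminormSq N s σ f ∧
        screenedSeminormSq N s σ f
            ≤ ENNReal.ofReal c *
              ∫⁻ ξ, ENNReal.ofReal
                (min (‖ξ‖ ^ (2 * s)) (‖ξ‖ ^ 2) *
                  ‖𝓕 (fun x => (f x : ℂ)) ξ‖ ^ 2) := by
  rcases Nat.eq_zero_or_pos N with rfl | hN
  · refine ⟨1, one_pos, fun f => ?_⟩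
    have h0 : ∀ ξ : EuclideanSpace ℝ (Fin 0), ‖ξ‖ = 0 := fun ξ => by
      rw [Subsingleton.elim ξ 0, norm_zero]
    have h1 : ∀ x h : EuclideanSpace ℝ (Fin 0), f (x + h) - f x = 0 := fun x h => by
      rw [Subsingleton.elim (x + h) x, sub_self]
    constructor
    · simp [h0, Real.zero_rpow (show 2 * s ≠ 0 by positivity)]
    · simp [screenedSeminormSq, h1]
  obtain ⟨c1, hc1, hl⟩ := S15.lower (N := N) s hs0 hs1 m hm
  obtain ⟨c2, hc2, hu⟩ := S15.upper (N := N) hN s hs0 hs1 M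
  refine ⟨max c1 c2, lt_max_of_lt_left hc1, fun f => ⟨?_, ?_⟩⟩
  · have hmono : (∫⁻ x, ∫⁻ h in Metric.ball (0 : EuclideanSpace ℝ (Fin N)) m,
        ENNReal.ofReal (|f (x + h) - f x| ^ 2 / ‖h‖ ^ (2 * s + N))) ≤ screenedSeminormSq N s σ f :=
      lintegral_mono fun x => lintegral_mono_set (ball_subset_ball (hσbd x).1)
    rw [S15.swap] at hmono
    refine le_trans ?_ (mul_le_mul' (ENNReal.ofReal_le_ofReal (le_max_left c1 c2)) hmono)
    rw [← lintegral_const_mul' _ _ ENNReal.ofReal_ne_top]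
    refine lintegral_mono fun ξ => ?_
    rw [ENNReal.ofReal_mul (by positivity), ← mul_assoc]
    exact mul_le_mul_left (hl ξ) _
  · have hmono : screenedSeminormSq N s σ f ≤
        (∫⁻ x, ∫⁻ h in Metric.ball (0 : EuclideanSpace ℝ (Fin N)) M,
        ENNReal.ofReal (|f (x + h) - f x| ^ 2 / ‖h‖ ^ (2 * s + N))) :=
      lintegral_mono fun x => lintegral_mono_set (ball_subset_ball (hσbd x).2)
    rw [S15.swap] at hmono
    refine hmono.trans (le_trans ?_
      (mul_le_mul_left (ENNReal.ofReal_le_ofReal (le_max_right c1 c2)) _))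
    rw [← lintegral_const_mul' _ _ ENNReal.ofReal_ne_top]
    refine lintegral_mono fun ξ => ?_
    rw [ENNReal.ofReal_mul (by positivity), ← mul_assoc]
    exact mul_le_mul_left (hu ξ) _
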